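/- arXiv:1102.2734 — 2 statements merged into one kernel-verified Lean document; each statement's English description precedes it below -/
import Mathlib

section
/- Let m ≥ 2 and 0 ≤ r with m ≥ 2r. Then U_{α^(m)}(RM(r,m)) = Σ_{i=0}^{r−1} k(r−1−i, m−1−2i) and U_{β^(m)}(RM(r,m)) = Σ_{i=1}^{r−1} k(r−1−i, m−2i) (both sums are empty, hence 0, when they have no terms). -/
open Module

/-- The submodule of vectors supported on `J` (i.e. zero outside `J`). -/
def supportedOn (F : Type) [Field F] {n : ℕ} (J : Set (Fin n)) : Submodule F (Fin n → F) :=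
  Submodule.pi Jᶜ fun _ => ⊥

/-- Dimension of the shortening `C_J` of the code `C` to the coordinates in `J`. -/
noncomputable def shortDim {F : Type} [Field F] {n : ℕ}
    (C : Submodule F (Fin n → F)) (J : Set (Fin n)) : ℕ :=
  finrank F ↥(C ⊓ supportedOn F J)

/-- Support of a subcode. -/
def chi {F : Type} [Field F] {n : ℕ} (D : Submodule F (Fin n → F)) : Set (Fin n) :=
  {i | ∃ c ∈ D, c i ≠ 0}

/-- `Ucap C s`: maximal dimension of a subcode of `C` whose support has size at most `s`. -/
noncomputable def Ucap {F : Type} [Field F] {n : ℕ}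
    (C : Submodule F (Fin n → F)) (s : ℕ) : ℕ :=
  sSup {d : ℕ | ∃ D : Submodule F (Fin n → F), D ≤ C ∧ (chi D).ncard ≤ s ∧ finrank F ↥D = d}

/-- The binary Reed–Muller code `RM(r,m)`: the evaluation vectors, at the points of
`{0,1}^m` listed in the standard bit order, of the `m`-variable polynomials over `F₂`
of total degree at most `r`. -/
def RMcode (r m : ℕ) : Submodule (ZMod 2) (Fin (2 ^ m) → ZMod 2) :=
  Submodule.span (ZMod 2)
    {w | ∃ f : MvPolynomial (Fin m) (ZMod 2), f.totalDegree ≤ r ∧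
      w = fun i => MvPolynomial.eval (fun j : Fin m => if Nat.testBit i.val j.val then 1 else 0) f}

/-- `k(r,m) = ∑_{j=0}^{r} C(m,j)`, the dimension of `RM(r,m)`. -/
def kRM (r m : ℕ) : ℕ := ∑ j ∈ Finset.range (r + 1), Nat.choose m j

/-- `α(m)`: the largest integer not exceeding `(2/3)·2^m`. -/
def alph (m : ℕ) : ℕ := 2 ^ (m + 1) / 3

/-- `β(m)`: the largest integer not exceeding `(1/3)·2^m`. -/
def bet (m : ℕ) : ℕ := 2 ^ m / 3


/-! ### Numerical part: popcount and its counting function -/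

/-- Binary weight of a natural number. -/
def bwt (n : ℕ) : ℕ := if h : n = 0 then 0 else n % 2 + bwt (n / 2)
decreasing_by exact Nat.div_lt_self (Nat.pos_of_ne_zero h) (by norm_num)

theorem bwt_zero : bwt 0 = 0 := by rw [bwt]; simp

theorem bwt_rec (n : ℕ) : bwt n = n % 2 + bwt (n / 2) := by
  by_cases h : n = 0
  · subst h; simp [bwt_zero]
  · conv_lhs => rw [bwt]
    simp [h]

theorem bwt_add (m : ℕ) : ∀ j, j < 2 ^ m → bwt (2 ^ m + j) = bwt j + 1 := by
  induction m with
  | zero =>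
    intro j hj
    have : j = 0 := by simpa using hj
    subst this
    rw [bwt_rec]; simp [bwt_zero]
  | succ m ih =>
    intro j hj
    rw [bwt_rec, bwt_rec j]
    have h1 : (2 ^ (m + 1) + j) / 2 = 2 ^ m + j / 2 := by rw [pow_succ]; omega
    have h2 : (2 ^ (m + 1) + j) % 2 = j % 2 := by rw [pow_succ]; omega
    rw [h1, h2, ih (j / 2) (by rw [pow_succ] at hj; omega)]
    ring

theorem bwt_le (m : ℕ) : ∀ j, j < 2 ^ m → bwt j ≤ m := by
  induction m with
  | zero => intro j hj; have : j = 0 := by simpa using hj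
            subst this; simp [bwt_zero]
  | succ m ih =>
    intro j hj
    rw [bwt_rec]
    have := ih (j / 2) (by rw [pow_succ] at hj; omega)
    omega

theorem bwt_lt (m : ℕ) : ∀ j, j + 1 < 2 ^ m → bwt j < m := by
  induction m with
  | zero => intro j hj; simp at hj
  | succ m ih =>
    intro j hj
    rw [bwt_rec]
    rw [pow_succ] at hj
    rcases Nat.mod_two_eq_zero_or_one j with h0 | h1
    · have := bwt_le m (j / 2) (by omega)
      omega
    · have := ih (j / 2) (by omega)
      omega

/-- Number of `i < s` with binary weight at least `t`. -/
def TT (t s : ℕ) : ℕ := ∑ i ∈ Finset.range s, if t ≤ bwt i then 1 else 0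

theorem TT_zero_right (t : ℕ) : TT t 0 = 0 := by simp [TT]

theorem TT_zero_left (s : ℕ) : TT 0 s = s := by simp [TT]

theorem TT_shift (t m s : ℕ) (hs : s ≤ 2 ^ m) :
    TT t (2 ^ m + s) = TT t (2 ^ m) + TT (t - 1) s := by
  unfold TT
  rw [Finset.sum_range_add]
  congr 1
  apply Finset.sum_congr rfl
  intro j hj
  rw [bwt_add m j (by have := Finset.mem_range.1 hj; omega)]
  have : (t ≤ bwt j + 1) ↔ (t - 1 ≤ bwt j) := by omega
  simp only [this]

theorem TT_mono_right (t : ℕ) {a b : ℕ} (h : a ≤ b) : TT t a ≤ TT t b := by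
  unfold TT
  exact Finset.sum_le_sum_of_subset (Finset.range_mono h)

/-- Antitone in `t`, for the counts on an interval. -/
theorem TT_diff (t c a : ℕ) (h : c ≤ a) : TT t a + TT (t - 1) c ≤ TT (t - 1) a + TT t c := by
  induction a, h using Nat.le_induction with
  | base => omega
  | succ a _ ih =>
    have e : ∀ u, TT u (a + 1) = TT u a + if u ≤ bwt a then 1 else 0 := by
      intro u; unfold TT; rw [Finset.sum_range_succ]
    rw [e, e]
    split_ifs <;> omega

theorem TT_anti (t a : ℕ) : TT t a ≤ TT (t - 1) a := by
  have := TT_diff t 0 a (Nat.zero_le _)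
  simpa [TT_zero_right] using this

theorem TT_top (m s : ℕ) (hs : s ≤ 2 ^ m) : TT (m + 1) s = 0 := by
  unfold TT
  apply Finset.sum_eq_zero
  intro j hj
  have := bwt_le m j (by have := Finset.mem_range.1 hj; omega)
  rw [if_neg (by omega)]

theorem TT_top' (m s : ℕ) (hs : s < 2 ^ m) : TT m s = 0 := by
  unfold TT
  apply Finset.sum_eq_zero
  intro j hj
  have := bwt_lt m j (by have := Finset.mem_range.1 hj; omega)
  rw [if_neg (by omega)]

theorem TT_AB (m : ℕ) :
    (∀ t a b, a ≤ b → a + b ≤ 2 ^ m → TT (t - 1) a + TT t b ≤ TT t (a + b)) ∧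
    (∀ t a b c, a ≤ b → b ≤ 2 ^ m → a + b = 2 ^ m + c →
      TT (t - 1) a + TT t b ≤ TT t (2 ^ m) + TT (t - 1) c) := by
  induction m with
  | zero =>
    refine ⟨?_, ?_⟩
    · intro t a b h1 h2
      have : a = 0 := by rw [pow_zero] at h2; omega
      subst this
      simp [TT_zero_right]
    · intro t a b c h1 h2 h3
      rw [pow_zero] at *
      have hb : b = 1 := by omega
      have hc : c = a := by omega
      subst hb hc
      omega
  | succ m ih =>
    obtain ⟨hA, hB⟩ := ih
    have hQ : ∀ t a b, a + b ≤ 2 ^ m → TT t a + TT t b ≤ TT t (a + b) := by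
      intro t a b hab
      rcases le_total a b with h | h
      · have := hA t a b h hab
        have := TT_anti t a
        omega
      · have := hA t b a h (by omega)
        have := TT_anti t b
        rw [add_comm a b]
        omega
    have hS : ∀ t a b c, a ≤ 2 ^ m → b ≤ 2 ^ m → a + b = 2 ^ m + c →
        TT t a + TT t b ≤ TT t (2 ^ m) + TT t c := by
      intro t a b c ha hb habc
      rcases le_total a b with h | h
      · have := hB t a b c h hb habc
        have := TT_diff t c a (by omega)
        omega
      · have := hB t b a c h ha (by omega)
        have := TT_diff t c b (by omega)
        omega
    rw [pow_succ]
    refine ⟨?_, ?_⟩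
    · intro t a b h1 h2
      by_cases hab : a + b ≤ 2 ^ m
      · exact hA t a b h1 hab
      by_cases hb : b ≤ 2 ^ m
      · obtain ⟨c, hc⟩ : ∃ c, a + b = 2 ^ m + c := ⟨a + b - 2 ^ m, by omega⟩
        rw [hc, TT_shift t m c (by omega)]
        exact hB t a b c h1 hb hc
      · obtain ⟨b', rfl⟩ : ∃ c, b = 2 ^ m + c := ⟨b - 2 ^ m, by omega⟩
        rw [show a + (2 ^ m + b') = 2 ^ m + (a + b') by ring, TT_shift t m _ (by omega),
          TT_shift t m _ (by omega)]
        have := hQ (t - 1) a b' (by omega)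
        omega
    · intro t a b c h1 h2 h3
      obtain ⟨b', rfl⟩ : ∃ c, b = 2 ^ m + c := ⟨b - 2 ^ m, by omega⟩
      rw [show 2 ^ m * 2 = 2 ^ m + 2 ^ m by ring, TT_shift t m _ (by omega),
          TT_shift t m _ le_rfl]
      by_cases ha : a ≤ 2 ^ m
      · have := hS (t - 1) a b' c ha (by omega) (by omega)
        omega
      · obtain ⟨a', rfl⟩ : ∃ c, a = 2 ^ m + c := ⟨a - 2 ^ m, by omega⟩
        rw [TT_shift (t - 1) m _ (by omega)]
        have hc : c = a' + b' := by omega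
        by_cases hc' : c ≤ 2 ^ m
        · have := hA (t - 1) a' b' (by omega) (by omega)
          rw [hc]
          omega
        · obtain ⟨c', rfl⟩ : ∃ x, c = 2 ^ m + x := ⟨c - 2 ^ m, by omega⟩
          rw [TT_shift (t - 1) m _ (by omega)]
          have := hB (t - 1) a' b' c' (by omega) (by omega) (by omega)
          omega

theorem TT_A (t a b : ℕ) (h : a ≤ b) : TT (t - 1) a + TT t b ≤ TT t (a + b) :=
  (TT_AB (a + b)).1 t a b h (Nat.lt_two_pow_self).le

theorem kRM_eq (m : ℕ) : ∀ r, kRM r m = TT (m - r) (2 ^ m) := by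
  induction m with
  | zero =>
    intro r
    rw [Nat.zero_sub, TT_zero_left]
    unfold kRM
    rw [Finset.sum_range_succ']
    simp
  | succ m ih =>
    intro r
    rw [show 2 ^ (m + 1) = 2 ^ m + 2 ^ m by ring, TT_shift _ m _ le_rfl]
    cases r with
    | zero =>
      have h0 : ∀ n, kRM 0 n = 1 := by intro n; simp [kRM]
      have := ih 0
      rw [h0] at *
      rw [Nat.sub_zero, TT_top m _ le_rfl]
      simpa using this
    | succ r =>
      have h1 : kRM (r + 1) (m + 1) = kRM r m + kRM (r + 1) m := by
        unfold kRM
        rw [Finset.sum_range_succ' _ (r + 1), Finset.sum_range_succ' _ (r + 1)]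
        simp only [Nat.choose_succ_succ, Finset.sum_add_distrib, Nat.choose_zero_right]
        ring
      rw [h1, ih, ih]
      have e1 : m + 1 - (r + 1) = m - r := by omega
      have e2 : m - r - 1 = m - (r + 1) := by omega
      rw [e1, e2]

theorem alph_lt (m : ℕ) : alph m < 2 ^ m := by
  unfold alph
  have := Nat.two_pow_pos m
  rw [pow_succ]; omega

theorem alph_rec (m : ℕ) : alph (m + 2) = 2 ^ (m + 1) + alph m := by
  unfold alph
  simp only [pow_succ]; omega

theorem TT_alph (r : ℕ) : ∀ m, 2 * r ≤ m →
    TT (m - r) (alph m) = ∑ i ∈ Finset.range r, kRM (r - 1 - i) (m - 1 - 2 * i) := by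
  induction r with
  | zero => intro m _; simpa using TT_top' m _ (alph_lt m)
  | succ r ih =>
    intro m hm
    obtain ⟨n, rfl⟩ : ∃ n, m = n + 2 := ⟨m - 2, by omega⟩
    have hlt := alph_lt n
    rw [alph_rec, TT_shift _ _ _ (by rw [pow_succ]; omega), Finset.sum_range_succ', kRM_eq,
      show n + 2 - (r + 1) - 1 = n - r by omega, ih n (by omega), add_comm]
    congr 1
    · apply Finset.sum_congr rfl
      intro i _
      congr 1 <;> omega
    · congr 1
      omega

theorem TT_bet (r m : ℕ) (hm : 2 ≤ m) (h : 2 * r ≤ m) :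
    TT (m - r) (bet m) = ∑ i ∈ Finset.Icc 1 (r - 1), kRM (r - 1 - i) (m - 2 * i) := by
  obtain ⟨n, rfl⟩ : ∃ n, m = n + 1 := ⟨m - 1, by omega⟩
  have hb : bet (n + 1) = alph n := rfl
  rw [hb]
  cases r with
  | zero =>
    have := alph_lt n
    simpa using TT_top' (n + 1) _ (by rw [pow_succ]; omega)
  | succ r =>
    rw [show n + 1 - (r + 1) = n - r by omega, TT_alph r n (by omega), Nat.add_sub_cancel,
      ← Finset.Ico_succ_right_eq_Icc, Finset.sum_Ico_eq_sum_range]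
    apply Finset.sum_congr (by simp)
    intro i _
    congr 1 <;> omega

/-! ### The recursive structure of Reed–Muller codes -/

/-- The bit `j` of `n`, as an element of `F₂`. -/
def bitV (n j : ℕ) : ZMod 2 := if Nat.testBit n j then 1 else 0

/-- Evaluation vector of the monomial with variable set `S`. -/
def monoV (m : ℕ) (S : Finset ℕ) : Fin (2 ^ m) → ZMod 2 :=
  fun i => ∏ j ∈ S, bitV i.val j

/-- Code of polynomials of degree less than `e`. -/
def CC (e m : ℕ) : Submodule (ZMod 2) (Fin (2 ^ m) → ZMod 2) :=
  Submodule.span (ZMod 2) {w | ∃ S : Finset ℕ, S ⊆ Finset.range m ∧ S.card < e ∧ w = monoV m S}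

theorem monoV_mem {e m : ℕ} {S : Finset ℕ} (h : S ⊆ Finset.range m) (hc : S.card < e) :
    monoV m S ∈ CC e m := Submodule.subset_span ⟨S, h, hc, rfl⟩

theorem CC_mono {e e' : ℕ} (h : e ≤ e') (m : ℕ) : CC e m ≤ CC e' m := by
  apply Submodule.span_mono
  rintro w ⟨S, h1, h2, h3⟩
  exact ⟨S, h1, h2.trans_le h, h3⟩

theorem CC_zero (m : ℕ) : CC 0 m = ⊥ := by
  simp [CC]

theorem RMcode_eq (r m : ℕ) : RMcode r m = CC (r + 1) m := by
  apply le_antisymm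
  · apply Submodule.span_le.2
    rintro w ⟨f, hf, rfl⟩
    have : (fun i : Fin (2 ^ m) => MvPolynomial.eval
        (fun j : Fin m => if Nat.testBit i.val j.val then (1 : ZMod 2) else 0) f) =
        ∑ d ∈ f.support, MvPolynomial.coeff d f • monoV m (d.support.map Fin.valEmbedding) := by
      funext i
      rw [MvPolynomial.eval_eq, Finset.sum_apply]
      apply Finset.sum_congr rfl
      intro d _
      simp only [Pi.smul_apply, smul_eq_mul, monoV, Finset.prod_map]
      congr 1
      apply Finset.prod_congr rfl
      intro j hj
      have : d j ≠ 0 := Finsupp.mem_support_iff.1 hj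
      simp only [Fin.valEmbedding_apply, bitV]
      split_ifs <;> simp [this]
    rw [this]
    apply Submodule.sum_mem
    intro d hd
    apply Submodule.smul_mem
    apply monoV_mem
    · intro x hx
      simp only [Finset.mem_map, Fin.valEmbedding_apply] at hx
      obtain ⟨j, _, rfl⟩ := hx
      simp
    · rw [Finset.card_map]
      have h1 := MvPolynomial.le_totalDegree hd
      have h2 : d.support.card ≤ d.sum fun _ e => e := by
        rw [Finsupp.sum, Finset.card_eq_sum_ones]
        apply Finset.sum_le_sum
        intro j hj
        exact Nat.one_le_iff_ne_zero.2 (Finsupp.mem_support_iff.1 hj)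
      omega
  · apply Submodule.span_le.2
    rintro w ⟨S, hS, hc, rfl⟩
    apply Submodule.subset_span
    refine ⟨∏ j : {j // j ∈ S}, MvPolynomial.X ⟨j.1, Finset.mem_range.1 (hS j.2)⟩, ?_, ?_⟩
    · refine (MvPolynomial.totalDegree_finsetProd _ _).trans ?_
      simp only [MvPolynomial.totalDegree_X]
      simp
      omega
    · funext i
      simp only [map_prod, MvPolynomial.eval_X, monoV]
      exact (Finset.prod_coe_sort S (fun j => bitV i.val j)).symm

/-- Embedding of the lower half. -/
def iLo (m : ℕ) (i : Fin (2 ^ m)) : Fin (2 ^ (m + 1)) :=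
  ⟨i.val, by have := i.2; rw [pow_succ]; omega⟩

/-- Embedding of the upper half. -/
def iHi (m : ℕ) (i : Fin (2 ^ m)) : Fin (2 ^ (m + 1)) :=
  ⟨2 ^ m + i.val, by have := i.2; rw [pow_succ]; omega⟩

theorem iLo_inj (m : ℕ) : Function.Injective (iLo m) := by
  intro a b h
  simpa [iLo, Fin.ext_iff] using h

theorem iHi_inj (m : ℕ) : Function.Injective (iHi m) := by
  intro a b h
  simpa [iHi, Fin.ext_iff] using h

theorem half_cases (m : ℕ) (i : Fin (2 ^ (m + 1))) : (∃ j, i = iLo m j) ∨ (∃ j, i = iHi m j) := by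
  by_cases h : i.val < 2 ^ m
  · exact Or.inl ⟨⟨i.val, h⟩, rfl⟩
  · right
    have := i.2.trans_eq (pow_succ 2 m)
    refine ⟨⟨i.val - 2 ^ m, by omega⟩, ?_⟩
    apply Fin.ext
    simp [iHi]
    omega

theorem iLo_ne_iHi (m : ℕ) (a b : Fin (2 ^ m)) : iLo m a ≠ iHi m b := by
  intro h
  have := congrArg Fin.val h
  simp only [iLo, iHi] at this
  have := a.2
  omega

/-- Restriction to the lower half. -/
def loM (m : ℕ) : (Fin (2 ^ (m + 1)) → ZMod 2) →ₗ[ZMod 2] (Fin (2 ^ m) → ZMod 2) :=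
  LinearMap.funLeft _ _ (iLo m)

/-- Restriction to the upper half. -/
def hiM (m : ℕ) : (Fin (2 ^ (m + 1)) → ZMod 2) →ₗ[ZMod 2] (Fin (2 ^ m) → ZMod 2) :=
  LinearMap.funLeft _ _ (iHi m)

/-- Glue two halves. -/
def glueM (m : ℕ) : ((Fin (2 ^ m) → ZMod 2) × (Fin (2 ^ m) → ZMod 2)) →ₗ[ZMod 2]
    (Fin (2 ^ (m + 1)) → ZMod 2) where
  toFun p i := if h : i.val < 2 ^ m then p.1 ⟨i.val, h⟩ else
    p.2 ⟨i.val - 2 ^ m, by have := i.2.trans_eq (pow_succ 2 m); omega⟩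
  map_add' p q := by
    funext i
    simp only [Pi.add_apply, Prod.fst_add, Prod.snd_add]
    split_ifs <;> rfl
  map_smul' c p := by
    funext i
    simp only [Pi.smul_apply, Prod.smul_fst, Prod.smul_snd, RingHom.id_apply]
    split_ifs <;> rfl

theorem lo_glue (m : ℕ) (p) : loM m (glueM m p) = p.1 := by
  funext i
  simp [loM, glueM, LinearMap.funLeft_apply, iLo]

theorem hi_glue (m : ℕ) (p) : hiM m (glueM m p) = p.2 := by
  funext i
  simp [hiM, glueM, LinearMap.funLeft_apply, iHi]

theorem half_ext (m : ℕ) {w w' : Fin (2 ^ (m + 1)) → ZMod 2} (h1 : loM m w = loM m w')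
    (h2 : hiM m w = hiM m w') : w = w' := by
  funext i
  rcases half_cases m i with ⟨j, rfl⟩ | ⟨j, rfl⟩
  · exact congrFun h1 j
  · exact congrFun h2 j

theorem lo_mono (m : ℕ) (S : Finset ℕ) :
    loM m (monoV (m + 1) S) = monoV m S := rfl

theorem hi_mono (m : ℕ) (S : Finset ℕ) (hS : S ⊆ Finset.range m) :
    hiM m (monoV (m + 1) S) = monoV m S := by
  funext i
  simp only [hiM, LinearMap.funLeft_apply, monoV, iHi]
  apply Finset.prod_congr rfl
  intro j hj
  unfold bitV
  rw [Nat.testBit_two_pow_add_gt (Finset.mem_range.1 (hS hj))]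

theorem lo_mono_insert (m : ℕ) (S : Finset ℕ) (hS : S ⊆ Finset.range m) :
    loM m (monoV (m + 1) (insert m S)) = 0 := by
  funext i
  simp only [loM, LinearMap.funLeft_apply, monoV, iLo, Pi.zero_apply]
  apply Finset.prod_eq_zero (Finset.mem_insert_self m S)
  unfold bitV
  rw [Nat.testBit_lt_two_pow i.2]
  simp

theorem hi_mono_insert (m : ℕ) (S : Finset ℕ) (hS : S ⊆ Finset.range m) :
    hiM m (monoV (m + 1) (insert m S)) = monoV m S := by
  have hm : m ∉ S := fun h => by simpa using hS h
  rw [← hi_mono m S hS]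
  funext i
  simp only [hiM, LinearMap.funLeft_apply, monoV, iHi]
  have hb : bitV (2 ^ m + i.val) m = 1 := by
    unfold bitV
    rw [Nat.testBit_two_pow_add_eq, Nat.testBit_lt_two_pow i.2]
    simp
  rw [Finset.prod_insert hm, hb, one_mul]

theorem add_self_fun {n : ℕ} (u : Fin n → ZMod 2) : u + u = 0 := by
  funext i
  exact CharTwo.add_self_eq_zero _

theorem CC_rec (e m : ℕ) (w : Fin (2 ^ (m + 1)) → ZMod 2) :
    w ∈ CC (e + 1) (m + 1) ↔ loM m w ∈ CC (e + 1) m ∧ loM m w + hiM m w ∈ CC e m := by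
  constructor
  · intro hw
    suffices h : CC (e + 1) (m + 1) ≤
        (CC (e + 1) m).comap (loM m) ⊓ (CC e m).comap (loM m + hiM m) from h hw
    apply Submodule.span_le.2
    rintro _ ⟨S, hS, hc, rfl⟩
    change loM m (monoV (m + 1) S) ∈ CC (e + 1) m ∧
      loM m (monoV (m + 1) S) + hiM m (monoV (m + 1) S) ∈ CC e m
    by_cases hm : m ∈ S
    · have hS' : S.erase m ⊆ Finset.range m := by
        intro x hx
        have h1 := Finset.mem_erase.1 hx
        have h2 := Finset.mem_range.1 (hS h1.2)
        rw [Finset.mem_range]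
        omega
      rw [← Finset.insert_erase hm, lo_mono_insert m _ hS', hi_mono_insert m _ hS', zero_add]
      refine ⟨Submodule.zero_mem _, monoV_mem hS' ?_⟩
      have := Finset.card_erase_add_one hm
      omega
    · have hS' : S ⊆ Finset.range m := by
        intro x hx
        have h2 := Finset.mem_range.1 (hS hx)
        have : x ≠ m := fun h => hm (h ▸ hx)
        rw [Finset.mem_range]
        omega
      rw [lo_mono m _, hi_mono m _ hS', add_self_fun]
      exact ⟨monoV_mem hS' hc, Submodule.zero_mem _⟩
  · rintro ⟨h1, h2⟩
    have key1 : CC (e + 1) m ≤ (CC (e + 1) (m + 1)).comap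
        ((glueM m).comp (LinearMap.inl _ _ _ + LinearMap.inr _ _ _)) := by
      apply Submodule.span_le.2
      rintro _ ⟨S, hS, hc, rfl⟩
      have : glueM m ((monoV m S, 0) + (0, monoV m S)) = monoV (m + 1) S := by
        apply half_ext m
        · rw [lo_glue, lo_mono m S]; simp
        · rw [hi_glue, hi_mono m S hS]; simp
      change glueM m ((monoV m S, 0) + (0, monoV m S)) ∈ CC (e + 1) (m + 1)
      rw [this]
      exact monoV_mem (hS.trans (Finset.range_mono (Nat.le_succ m))) hc
    have key2 : CC e m ≤ (CC (e + 1) (m + 1)).comap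
        ((glueM m).comp (LinearMap.inr _ _ _)) := by
      apply Submodule.span_le.2
      rintro _ ⟨S, hS, hc, rfl⟩
      have : glueM m (0, monoV m S) = monoV (m + 1) (insert m S) := by
        apply half_ext m
        · rw [lo_glue, lo_mono_insert m S hS]
        · rw [hi_glue, hi_mono_insert m S hS]
      change glueM m (0, monoV m S) ∈ CC (e + 1) (m + 1)
      rw [this]
      refine monoV_mem ?_ ((Finset.card_insert_le _ _).trans_lt (by omega))
      apply Finset.insert_subset (by simp)
      exact hS.trans (Finset.range_mono (Nat.le_succ m))
    have k1 : glueM m ((loM m w, 0) + (0, loM m w)) ∈ CC (e + 1) (m + 1) := key1 h1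
    have k2 : glueM m (0, loM m w + hiM m w) ∈ CC (e + 1) (m + 1) := key2 h2
    have hw : w = glueM m ((loM m w, 0) + (0, loM m w)) + glueM m (0, loM m w + hiM m w) := by
      apply half_ext m
      · rw [map_add, lo_glue, lo_glue]
        simp
      · rw [map_add, hi_glue, hi_glue]
        simp only [Prod.snd_add, zero_add]
        rw [← add_assoc, add_self_fun, zero_add]
    rw [hw]
    exact Submodule.add_mem _ k1 k2

theorem CC_base (e : ℕ) : CC (e + 1) 0 = ⊤ := by
  rw [eq_top_iff]
  intro w _
  have : w = w 0 • monoV 0 ∅ := by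
    funext i
    have : i = 0 := Subsingleton.elim (α := Fin 1) _ _
    subst this
    simp [monoV]
  rw [this]
  exact Submodule.smul_mem _ _ (monoV_mem (by simp) (by simp))

/-! ### Upper bound -/

theorem chi_mono {n : ℕ} {D E : Submodule (ZMod 2) (Fin n → ZMod 2)} (h : D ≤ E) :
    chi D ⊆ chi E := fun _ ⟨c, hc, hi⟩ => ⟨c, h hc, hi⟩

theorem chi_split (m : ℕ) (D : Submodule (ZMod 2) (Fin (2 ^ (m + 1)) → ZMod 2)) :
    (chi D).ncard = (chi (D.map (loM m))).ncard + (chi (D.map (hiM m))).ncard := by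
  have h : chi D = iLo m '' chi (D.map (loM m)) ∪ iHi m '' chi (D.map (hiM m)) := by
    ext i
    constructor
    · rintro ⟨c, hc, hi⟩
      rcases half_cases m i with ⟨j, rfl⟩ | ⟨j, rfl⟩
      · exact Or.inl ⟨j, ⟨_, Submodule.mem_map_of_mem hc, hi⟩, rfl⟩
      · exact Or.inr ⟨j, ⟨_, Submodule.mem_map_of_mem hc, hi⟩, rfl⟩
    · rintro (⟨j, ⟨_, ⟨c, hc, rfl⟩, hi⟩, rfl⟩ | ⟨j, ⟨_, ⟨c, hc, rfl⟩, hi⟩, rfl⟩)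
      · exact ⟨c, hc, hi⟩
      · exact ⟨c, hc, hi⟩
  rw [h, Set.ncard_union_eq ?_ (Set.toFinite _) (Set.toFinite _),
    Set.ncard_image_of_injective _ (iLo_inj m), Set.ncard_image_of_injective _ (iHi_inj m)]
  rw [Set.disjoint_left]
  rintro _ ⟨a, _, rfl⟩ ⟨b, _, hb⟩
  exact iLo_ne_iHi m a b hb.symm

theorem finrank_split {n k : ℕ} (D : Submodule (ZMod 2) (Fin n → ZMod 2))
    (p q : (Fin n → ZMod 2) →ₗ[ZMod 2] (Fin k → ZMod 2))
    (hpq : ∀ w, p w = 0 → q w = 0 → w = 0) :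
    finrank (ZMod 2) D ≤ finrank (ZMod 2) (D.map p) +
      finrank (ZMod 2) ((D ⊓ LinearMap.ker p).map q) := by
  have h1 := LinearMap.finrank_range_add_finrank_ker (p.domRestrict D)
  have h2 : LinearMap.range (p.domRestrict D) = D.map p := by
    rw [LinearMap.range_domRestrict]
  have h3 : finrank (ZMod 2) (LinearMap.ker (p.domRestrict D)) ≤
      finrank (ZMod 2) ((D ⊓ LinearMap.ker p).map q) := by
    let g : LinearMap.ker (p.domRestrict D) →ₗ[ZMod 2] ((D ⊓ LinearMap.ker p).map q) :=
      LinearMap.codRestrict _ (q ∘ₗ D.subtype ∘ₗ (LinearMap.ker (p.domRestrict D)).subtype)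
        (fun x => ⟨x.1.1, ⟨x.1.2, x.2⟩, rfl⟩)
    apply LinearMap.finrank_le_finrank_of_injective (f := g)
    rw [injective_iff_map_eq_zero]
    intro x hx
    have hq : q x.1.1 = 0 := congrArg Subtype.val hx
    have hp : p x.1.1 = 0 := x.2
    exact Subtype.ext (Subtype.ext (hpq _ hp hq))
  rw [h2] at h1
  omega

theorem upper (m : ℕ) : ∀ (e : ℕ) (D : Submodule (ZMod 2) (Fin (2 ^ m) → ZMod 2)), D ≤ CC e m →
    finrank (ZMod 2) D ≤ TT (m + 1 - e) (chi D).ncard := by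
  induction m with
  | zero =>
    intro e D hD
    cases e with
    | zero =>
      rw [CC_zero, le_bot_iff] at hD
      subst hD
      simp
    | succ e =>
      rw [show 0 + 1 - (e + 1) = 0 by omega, TT_zero_left]
      by_cases h : D = ⊥
      · subst h; simp
      · obtain ⟨w, hw, hne⟩ := Submodule.exists_mem_ne_zero_of_ne_bot h
        have h1 : finrank (ZMod 2) D ≤ 1 := by
          have := Submodule.finrank_le D
          simpa using this
        have h2 : (chi D).Nonempty := by
          by_contra hcon
          apply hne
          funext i
          by_contra hi
          exact hcon ⟨i, w, hw, hi⟩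
        have := (Set.ncard_pos (Set.toFinite _)).2 h2
        omega
  | succ m ih =>
    intro e D hD
    cases e with
    | zero =>
      rw [CC_zero, le_bot_iff] at hD
      subst hD
      simp
    | succ e =>
      rw [chi_split]
      have hlo : D.map (loM m) ≤ CC (e + 1) m := by
        rintro _ ⟨w, hw, rfl⟩
        exact ((CC_rec e m w).1 (hD hw)).1
      have hhi : D.map (hiM m) ≤ CC (e + 1) m := by
        rintro _ ⟨w, hw, rfl⟩
        obtain ⟨a, b⟩ := (CC_rec e m w).1 (hD hw)
        have := Submodule.add_mem _ a (CC_mono (Nat.le_succ e) m b)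
        rwa [← add_assoc, add_self_fun, zero_add] at this
      have hlo' : (D ⊓ LinearMap.ker (hiM m)).map (loM m) ≤ CC e m := by
        rintro _ ⟨w, ⟨hw, hk⟩, rfl⟩
        have hk' : hiM m w = 0 := hk
        have := ((CC_rec e m w).1 (hD hw)).2
        rwa [hk', add_zero] at this
      have hhi' : (D ⊓ LinearMap.ker (loM m)).map (hiM m) ≤ CC e m := by
        rintro _ ⟨w, ⟨hw, hk⟩, rfl⟩
        have hk' : loM m w = 0 := hk
        have := ((CC_rec e m w).1 (hD hw)).2
        rwa [hk', zero_add] at this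
      have e1 : m + 1 + 1 - (e + 1) = m + 1 - e := by omega
      have e2 : m + 1 - (e + 1) = m + 1 - e - 1 := by omega
      rw [e1]
      rcases le_total (chi (D.map (loM m))).ncard (chi (D.map (hiM m))).ncard with h | h
      · have a1 := finrank_split D (loM m) (hiM m)
          (fun w h1 h2 => half_ext m (by simpa using h1) (by simpa using h2))
        have a2 := ih _ _ hlo
        have a3 := ih _ _ hhi'
        have a4 := TT_mono_right (m + 1 - e) (Set.ncard_le_ncard (chi_mono
          (Submodule.map_mono (f := hiM m) (inf_le_left : D ⊓ LinearMap.ker (loM m) ≤ D)))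
          (Set.toFinite _))
        have a5 := TT_A (m + 1 - e) _ _ h
        rw [e2] at a2
        omega
      · have a1 := finrank_split D (hiM m) (loM m)
          (fun w h1 h2 => half_ext m (by simpa using h2) (by simpa using h1))
        have a2 := ih _ _ hhi
        have a3 := ih _ _ hlo'
        have a4 := TT_mono_right (m + 1 - e) (Set.ncard_le_ncard (chi_mono
          (Submodule.map_mono (f := loM m) (inf_le_left : D ⊓ LinearMap.ker (hiM m) ≤ D)))
          (Set.toFinite _))
        have a5 := TT_A (m + 1 - e) _ _ h
        rw [e2] at a2
        rw [add_comm (chi (D.map (hiM m))).ncard] at a5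
        omega

/-! ### Lower bound -/

theorem lower (m : ℕ) : ∀ (e s : ℕ), s ≤ 2 ^ m →
    ∃ D : Submodule (ZMod 2) (Fin (2 ^ m) → ZMod 2), D ≤ CC e m ∧
      (∀ w ∈ D, ∀ i : Fin (2 ^ m), s ≤ i.val → w i = 0) ∧
      TT (m + 1 - e) s ≤ finrank (ZMod 2) D := by
  induction m with
  | zero =>
    intro e s hs
    cases e with
    | zero =>
      refine ⟨⊥, bot_le, ?_, ?_⟩
      · intro w hw i _
        rw [(Submodule.mem_bot _).1 hw]; rfl
      · rw [Nat.sub_zero, TT_top 0 s hs]; simp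
    | succ e =>
      rw [show 0 + 1 - (e + 1) = 0 by omega, TT_zero_left]
      by_cases h : s = 0
      · subst h
        refine ⟨⊥, bot_le, ?_, by simp⟩
        intro w hw i _
        rw [(Submodule.mem_bot _).1 hw]; rfl
      · refine ⟨⊤, by rw [CC_base], ?_, ?_⟩
        · intro w _ i hi
          have := i.2.trans_eq (pow_zero 2)
          omega
        · rw [finrank_top]
          simpa using hs
  | succ m ih =>
    intro e s hs
    cases e with
    | zero =>
      refine ⟨⊥, bot_le, ?_, ?_⟩
      · intro w hw i _
        rw [(Submodule.mem_bot _).1 hw]; rfl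
      · rw [Nat.sub_zero, TT_top (m + 1) s hs]; simp
    | succ e =>
      have e1 : m + 1 + 1 - (e + 1) = m + 1 - e := by omega
      have e2 : m + 1 - (e + 1) = m + 1 - e - 1 := by omega
      rw [e1]
      by_cases h : s ≤ 2 ^ m
      · obtain ⟨H, h1, h2, h3⟩ := ih e s h
        have hinj : Function.Injective ((glueM m).comp
            (LinearMap.inl (ZMod 2) (Fin (2 ^ m) → ZMod 2) (Fin (2 ^ m) → ZMod 2))) := by
          intro a b hab
          have := congrArg (loM m) hab
          simpa [lo_glue] using this
        refine ⟨H.map ((glueM m).comp (LinearMap.inl _ _ _)), ?_, ?_, ?_⟩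
        · rintro _ ⟨v, hv, rfl⟩
          rw [CC_rec]
          simp only [LinearMap.comp_apply, lo_glue, hi_glue, LinearMap.inl_apply, add_zero]
          exact ⟨CC_mono (Nat.le_succ e) m (h1 hv), h1 hv⟩
        · rintro _ ⟨v, hv, rfl⟩ i hi
          rcases half_cases m i with ⟨j, rfl⟩ | ⟨j, rfl⟩
          · have := congrFun (lo_glue m (v, 0)) j
            exact this.trans (h2 v hv j hi)
          · exact congrFun (hi_glue m (v, 0)) j
        · rw [← LinearEquiv.finrank_eq (Submodule.equivMapOfInjective _ hinj H)]
          exact h3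
      · obtain ⟨s', rfl⟩ : ∃ x, s = 2 ^ m + x := ⟨s - 2 ^ m, by omega⟩
        have hs' : s' ≤ 2 ^ m := by rw [pow_succ] at hs; omega
        rw [TT_shift _ m s' hs', ← e2]
        obtain ⟨H, h1, _, h3⟩ := ih e (2 ^ m) le_rfl
        obtain ⟨G, g1, g2, g3⟩ := ih (e + 1) s' hs'
        let φ : (H × G) →ₗ[ZMod 2] (Fin (2 ^ (m + 1)) → ZMod 2) :=
          (glueM m).comp (LinearMap.prod (LinearMap.coprod H.subtype G.subtype)
            (G.subtype.comp (LinearMap.snd _ _ _)))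
        have hφ : ∀ x, φ x = glueM m (x.1.1 + x.2.1, x.2.1) := fun x => rfl
        have hinj : Function.Injective φ := by
          rw [injective_iff_map_eq_zero]
          intro x hx
          rw [hφ] at hx
          have a1 := congrArg (loM m) hx
          have a2 := congrArg (hiM m) hx
          rw [lo_glue, map_zero] at a1
          rw [hi_glue, map_zero] at a2
          simp only at a1 a2
          rw [a2, add_zero] at a1
          exact Prod.ext (Subtype.ext a1) (Subtype.ext a2)
        refine ⟨LinearMap.range φ, ?_, ?_, ?_⟩
        · rintro _ ⟨x, rfl⟩
          rw [hφ, CC_rec, lo_glue, hi_glue]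
          refine ⟨Submodule.add_mem _ (CC_mono (Nat.le_succ e) m (h1 x.1.2)) (g1 x.2.2), ?_⟩
          simp only
          rw [add_assoc, add_self_fun, add_zero]
          exact h1 x.1.2
        · rintro _ ⟨x, rfl⟩ i hi
          rw [hφ]
          rcases half_cases m i with ⟨j, rfl⟩ | ⟨j, rfl⟩
          · simp only [iLo] at hi
            have := j.2
            omega
          · have := congrFun (hi_glue m (x.1.1 + x.2.1, x.2.1)) j
            refine this.trans (g2 _ x.2.2 j ?_)
            simpa [iHi] using hi
        · rw [LinearMap.finrank_range_of_inj hinj, Module.finrank_prod]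
          omega

theorem Ucap_RM (r m s : ℕ) (hs : s ≤ 2 ^ m) : Ucap (RMcode r m) s = TT (m - r) s := by
  have hub : ∀ D : Submodule (ZMod 2) (Fin (2 ^ m) → ZMod 2), D ≤ RMcode r m →
      (chi D).ncard ≤ s → finrank (ZMod 2) D ≤ TT (m - r) s := by
    intro D hD hc
    rw [RMcode_eq] at hD
    have := upper m (r + 1) D hD
    rw [show m + 1 - (r + 1) = m - r by omega] at this
    exact this.trans (TT_mono_right _ hc)
  obtain ⟨D, h1, h2, h3⟩ := lower m (r + 1) s hs
  rw [show m + 1 - (r + 1) = m - r by omega] at h3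
  rw [← RMcode_eq] at h1
  have hc : (chi D).ncard ≤ s := by
    have hsub : Fin.val '' chi D ⊆ (Finset.range s : Set ℕ) := by
      rintro _ ⟨i, ⟨w, hw, hi⟩, rfl⟩
      rw [Finset.coe_range, Set.mem_Iio]
      by_contra hcon
      exact hi (h2 w hw i (not_lt.1 hcon))
    have := Set.ncard_le_ncard hsub (Set.toFinite _)
    rwa [Set.ncard_image_of_injective _ Fin.val_injective, Set.ncard_coe_finset,
      Finset.card_range] at this
  have hg : IsGreatest {d : ℕ | ∃ D : Submodule (ZMod 2) (Fin (2 ^ m) → ZMod 2),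
      D ≤ RMcode r m ∧ (chi D).ncard ≤ s ∧ finrank (ZMod 2) ↥D = d} (TT (m - r) s) := by
    refine ⟨⟨D, h1, hc, le_antisymm (hub D h1 hc) h3⟩, ?_⟩
    rintro d ⟨E, hE, hc', rfl⟩
    exact hub E hE hc'
  exact hg.csSup_eq

/-- for `m ≥ 2` and `m ≥ 2r`,
`U_α(RM(r,m)) = ∑_{i=0}^{r−1} k(r−1−i, m−1−2i)` and
`U_β(RM(r,m)) = ∑_{i=1}^{r−1} k(r−1−i, m−2i)`. -/
theorem stmt12 (r m : ℕ) (hm : 2 ≤ m) (h : 2 * r ≤ m) :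
    Ucap (RMcode r m) (alph m) = ∑ i ∈ Finset.range r, kRM (r - 1 - i) (m - 1 - 2 * i) ∧
    Ucap (RMcode r m) (bet m) = ∑ i ∈ Finset.Icc 1 (r - 1), kRM (r - 1 - i) (m - 2 * i) := by
  refine ⟨?_, ?_⟩
  · rw [Ucap_RM r m _ (alph_lt m).le, TT_alph r m h]
  · rw [Ucap_RM r m (bet m) (Nat.div_le_self _ _), TT_bet r m hm h]
end

section
/- For integers 0 ≤ r ≤ m and 1 ≤ s ≤ 2^m, U_s(RM(r,m)) equals the number of integers j with 0 ≤ j ≤ s−1 whose binary representation contains at least m − r ones (i.e., wt(j) ≥ m − r). -/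
open Module

/-- `wt x`: the number of ones in the binary representation of `x`. -/
def wtN (x : ℕ) : ℕ := (Nat.digits 2 x).count 1

/-- Counting function: number of `j < s` with weight at least `k`. -/
def cntN (s k : ℕ) : ℕ := ((Finset.range s).filter fun j => k ≤ wtN j).card

theorem wtN_zero : wtN 0 = 0 := by simp [wtN]

theorem wtN_even (j : ℕ) : wtN (2 * j) = wtN j := by
  rcases Nat.eq_zero_or_pos j with h | h
  · simp [h]
  · unfold wtN
    rw [Nat.digits_def' (by norm_num) (by omega)]
    simp

theorem wtN_odd (j : ℕ) : wtN (2 * j + 1) = wtN j + 1 := by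
  unfold wtN
  rw [Nat.digits_def' (by norm_num) (by omega)]
  have h1 : (2 * j + 1) % 2 = 1 := by omega
  have h2 : (2 * j + 1) / 2 = j := by omega
  simp [h1, h2]

theorem cntN_zero (k : ℕ) : cntN 0 k = 0 := by simp [cntN]

theorem cntN_zero_right (s : ℕ) : cntN s 0 = s := by simp [cntN]

theorem cntN_succ (s k : ℕ) : cntN (s + 1) k = cntN s k + if k ≤ wtN s then 1 else 0 := by
  unfold cntN
  rw [Finset.range_add_one, Finset.filter_insert]
  split_ifs <;> simp

theorem cntN_even (s k : ℕ) : cntN (2 * s) k = cntN s k + cntN s (k - 1) := by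
  induction s with
  | zero => simp [cntN_zero]
  | succ n ih =>
    rw [show 2 * (n + 1) = 2 * n + 1 + 1 by ring, cntN_succ, cntN_succ, ih, wtN_even, wtN_odd,
      cntN_succ, cntN_succ]
    split_ifs <;> omega

theorem cntN_odd (s k : ℕ) : cntN (2 * s + 1) k = cntN (s + 1) k + cntN s (k - 1) := by
  rw [cntN_succ, cntN_even, wtN_even, cntN_succ]
  omega

theorem cntN_superadd (n : ℕ) : ∀ a b k : ℕ, a + b = n → a ≤ b →
    cntN a (k - 1) + cntN b k ≤ cntN (a + b) k := by
  induction n using Nat.strong_induction_on with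
  | _ n ih =>
    intro a b k hn hab
    rcases Nat.eq_zero_or_pos a with h0 | h0
    · simp [h0, cntN_zero]
    rcases Nat.eq_or_lt_of_le hab with h | hlt
    · subst h
      rw [← two_mul, cntN_even]
      omega
    obtain ⟨a', rfl | rfl⟩ := Nat.even_or_odd' a <;> obtain ⟨b', rfl | rfl⟩ := Nat.even_or_odd' b
    · have h1 := ih (a' + b') (by omega) a' b' k rfl (by omega)
      have h2 := ih (a' + b') (by omega) a' b' (k - 1) rfl (by omega)
      rw [← mul_add]
      simp only [cntN_even]
      omega
    · have h1 := ih (a' + (b' + 1)) (by omega) a' (b' + 1) k rfl (by omega)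
      have h2 := ih (a' + b') (by omega) a' b' (k - 1) rfl (by omega)
      rw [show 2 * a' + (2 * b' + 1) = 2 * (a' + b') + 1 by ring]
      simp only [cntN_even, cntN_odd]
      rw [← add_assoc] at h1
      omega
    · have h1 := ih (a' + 1 + b') (by omega) (a' + 1) b' k rfl (by omega)
      have h2 := ih (a' + b') (by omega) a' b' (k - 1) rfl (by omega)
      rw [show 2 * a' + 1 + 2 * b' = 2 * (a' + b') + 1 by ring]
      simp only [cntN_even, cntN_odd]
      rw [show a' + 1 + b' = a' + b' + 1 by ring] at h1
      omega
    · have h1 := ih (a' + 1 + b') (by omega) (a' + 1) b' k rfl (by omega)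
      have h2 := ih (a' + (b' + 1)) (by omega) a' (b' + 1) (k - 1) rfl (by omega)
      rw [show 2 * a' + 1 + (2 * b' + 1) = 2 * (a' + b' + 1) by ring]
      simp only [cntN_even, cntN_odd]
      rw [show a' + 1 + b' = a' + b' + 1 by ring] at h1
      rw [← add_assoc] at h2
      have h3 := cntN_succ b' k
      have h4 := cntN_succ b' (k - 1)
      have h5 : (if k ≤ wtN b' then 1 else 0) ≤ (if k - 1 ≤ wtN b' then 1 else 0) := by
        split_ifs <;> omega
      omega

/-- Evaluations of monomials of degree `< t`. -/
def PCode (t m : ℕ) : Submodule (ZMod 2) ((Fin m → ZMod 2) → ZMod 2) :=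
  Submodule.span (ZMod 2) {w | ∃ α : Fin m → ℕ, ∑ i, α i < t ∧ w = fun x => ∏ i, x i ^ α i}

/-- Restriction to the half `x 0 = a`. -/
def rho (m : ℕ) (a : ZMod 2) :
    ((Fin (m + 1) → ZMod 2) → ZMod 2) →ₗ[ZMod 2] ((Fin m → ZMod 2) → ZMod 2) :=
  LinearMap.funLeft (ZMod 2) (ZMod 2) (fun x => (Fin.cons a x : Fin (m + 1) → ZMod 2))

theorem rho_apply (m : ℕ) (a : ZMod 2) (f : (Fin (m + 1) → ZMod 2) → ZMod 2)
    (x : Fin m → ZMod 2) : rho m a f x = f (Fin.cons a x) := rfl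

theorem PCode_zero (m : ℕ) : PCode 0 m = ⊥ := by simp [PCode]

theorem PCode_mem {t m : ℕ} (α : Fin m → ℕ) (h : ∑ i, α i < t) :
    (fun x : Fin m → ZMod 2 => ∏ i, x i ^ α i) ∈ PCode t m :=
  Submodule.subset_span ⟨α, h, rfl⟩

theorem rho_mem (t m : ℕ) (a : ZMod 2) : PCode t (m + 1) ≤ (PCode t m).comap (rho m a) := by
  refine Submodule.span_le.2 ?_
  rintro _ ⟨α, hα, rfl⟩
  rw [Fin.sum_univ_succ] at hα
  have : rho m a (fun x => ∏ i, x i ^ α i) =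
      a ^ α 0 • (fun x : Fin m → ZMod 2 => ∏ i, x i ^ α i.succ) := by
    funext x
    simp [rho_apply, Fin.prod_univ_succ]
  show rho m a _ ∈ PCode t m
  rw [this]
  exact Submodule.smul_mem _ _ (PCode_mem (fun i => α i.succ) (by omega))

theorem rho_sub_mem (t m : ℕ) (a b : ZMod 2) :
    PCode t (m + 1) ≤ (PCode (t - 1) m).comap (rho m a - rho m b) := by
  refine Submodule.span_le.2 ?_
  rintro _ ⟨α, hα, rfl⟩
  rw [Fin.sum_univ_succ] at hα
  have : (rho m a - rho m b) (fun x => ∏ i, x i ^ α i) =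
      (a ^ α 0 - b ^ α 0) • (fun x : Fin m → ZMod 2 => ∏ i, x i ^ α i.succ) := by
    funext x
    simp [rho_apply, Fin.prod_univ_succ, sub_mul]
  show (rho m a - rho m b) _ ∈ PCode (t - 1) m
  rw [this]
  by_cases h : α 0 = 0
  · simp [h]
  exact Submodule.smul_mem _ _ (PCode_mem (fun i => α i.succ) (by omega))

theorem finrank_split_s19 {K V W : Type} [Field K] [AddCommGroup V] [Module K V]
    [AddCommGroup W] [Module K W] [FiniteDimensional K V] [FiniteDimensional K W]
    (D : Submodule K V) (f g : V →ₗ[K] W)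
    (hfg : ∀ v ∈ D, f v = 0 → g v = 0 → v = 0) :
    finrank K D ≤ finrank K (D.map f) + finrank K ((D ⊓ LinearMap.ker f).map g) := by
  have h1 := LinearMap.finrank_range_add_finrank_ker (f.domRestrict D)
  have h2 : LinearMap.range (f.domRestrict D) = D.map f := by
    ext; simp
  rw [h2] at h1
  rw [← h1]
  gcongr
  let φ : LinearMap.ker (f.domRestrict D) →ₗ[K] ((D ⊓ LinearMap.ker f).map g) :=
    LinearMap.codRestrict _ (g ∘ₗ D.subtype ∘ₗ (LinearMap.ker (f.domRestrict D)).subtype) (by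
      rintro ⟨⟨v, hv⟩, hv2⟩
      exact ⟨v, ⟨hv, by simpa using hv2⟩, rfl⟩)
  refine LinearMap.finrank_le_finrank_of_injective (f := φ) ?_
  rw [injective_iff_map_eq_zero]
  rintro ⟨⟨v, hv⟩, hv2⟩ h
  have h3 : g v = 0 := congrArg Subtype.val h
  have := hfg v hv (by simpa using hv2) h3
  subst this
  rfl

theorem upper_s19 (m : ℕ) : ∀ (t : ℕ) (D : Submodule (ZMod 2) ((Fin m → ZMod 2) → ZMod 2))
    (S : Finset (Fin m → ZMod 2)), D ≤ PCode t m → (∀ c ∈ D, ∀ x, x ∉ S → c x = 0) →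
    finrank (ZMod 2) D ≤ cntN S.card (m + 1 - t) := by
  induction m with
  | zero =>
    intro t D S hD hS
    rcases Nat.eq_zero_or_pos t with h | h
    · subst h
      rw [PCode_zero, le_bot_iff] at hD
      subst hD
      simp
    · rw [show 0 + 1 - t = 0 by omega, cntN_zero_right]
      by_cases hx : (fun i => 0) ∈ S
      · have h1 : 1 ≤ S.card := Finset.card_pos.2 ⟨_, hx⟩
        have h2 := Submodule.finrank_le D
        simp at h2
        omega
      · have : D = ⊥ := by
          rw [eq_bot_iff]
          intro c hc
          rw [Submodule.mem_bot]
          funext x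
          rw [Subsingleton.elim x (fun i => 0)]
          exact hS c hc _ hx
        subst this
        simp
  | succ m ih =>
    intro t D S hD hS
    rcases Nat.eq_zero_or_pos t with h | h
    · subst h
      rw [PCode_zero, le_bot_iff] at hD
      subst hD
      simp
    let T : ZMod 2 → Finset (Fin m → ZMod 2) := fun a =>
      Finset.univ.filter fun x => (Fin.cons a x : Fin (m + 1) → ZMod 2) ∈ S
    have hcard : S.card = (T 0).card + (T 1).card := by
      have e1 : ∀ a, (T a).card = (S.filter fun x => x 0 = a).card := by
        intro a
        refine Finset.card_bij (fun x _ => (Fin.cons a x : Fin (m + 1) → ZMod 2)) ?_ ?_ ?_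
        · intro x hx
          simpa [T] using hx
        · intro x _ y _ hxy
          exact Fin.cons_right_injective _ hxy
        · intro y hy
          simp only [Finset.mem_filter] at hy
          have : (Fin.cons a (Fin.tail y) : Fin (m + 1) → ZMod 2) = y := by
            rw [← hy.2]; exact Fin.cons_self_tail y
          exact ⟨Fin.tail y, by simpa [T, this] using hy.1, this⟩
      rw [e1, e1, ← Finset.card_filter_add_card_filter_not (s := S) (fun x => x 0 = 0)]
      congr 2
      refine Finset.filter_congr fun x _ => ?_
      generalize x 0 = z
      revert z; decide
    have key : ∀ a b : ZMod 2, (∀ z, z = a ∨ z = b) → (T a).card ≤ (T b).card →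
        (T a).card + (T b).card = S.card → 
        finrank (ZMod 2) D ≤ cntN S.card (m + 1 + 1 - t) := by
      intro a b hab hle hsum
      have h1 := finrank_split_s19 D (rho m a) (rho m b) (by
        intro v _ ha hb
        funext x
        rw [← Fin.cons_self_tail x]
        rcases hab (x 0) with h | h <;> rw [h]
        · exact congrFun ha (Fin.tail x)
        · exact congrFun hb (Fin.tail x))
      have h2 := ih t (D.map (rho m a)) (T a)
        (Submodule.map_le_iff_le_comap.2 (hD.trans (rho_mem t m a))) (by
          rintro _ ⟨c, hc, rfl⟩ x hx
          exact hS c hc _ (by simpa [T] using hx))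
      have h3 := ih (t - 1) ((D ⊓ LinearMap.ker (rho m a)).map (rho m b)) (T b) (by
          rintro _ ⟨c, hc, rfl⟩
          have := rho_sub_mem t m b a (hD hc.1)
          have h0 : rho m a c = 0 := hc.2
          simpa [h0] using this) (by
          rintro _ ⟨c, hc, rfl⟩ x hx
          exact hS c hc.1 _ (by simpa [T] using hx))
      have h4 := cntN_superadd _ (T a).card (T b).card (m + 1 + 1 - t) rfl hle
      rw [hsum] at h4
      rw [show m + 1 + 1 - t - 1 = m + 1 - t by omega] at h4
      rw [show m + 1 - (t - 1) = m + 1 + 1 - t by omega] at h3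
      omega
    rcases le_total (T 0).card (T 1).card with h | h
    · exact key 0 1 (by decide) h hcard.symm
    · exact key 1 0 (by decide) h (by omega)

/-- The point with bits of `i`. -/
def pt (m : ℕ) (i : Fin (2 ^ m)) : Fin m → ZMod 2 :=
  fun j => if Nat.testBit i.val j.val then 1 else 0

theorem pt_injective (m : ℕ) : Function.Injective (pt m) := by
  intro i i' h
  apply Fin.ext
  apply Nat.eq_of_testBit_eq
  intro k
  by_cases hk : k < m
  · have := congrFun h ⟨k, hk⟩
    simp only [pt] at this
    cases h1 : Nat.testBit i.val k <;> cases h2 : Nat.testBit i'.val k <;> simp_all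
  · have hp : 2 ^ m ≤ 2 ^ k := Nat.pow_le_pow_right (by norm_num) (by omega)
    rw [Nat.testBit_lt_two_pow (lt_of_lt_of_le i.2 hp),
      Nat.testBit_lt_two_pow (lt_of_lt_of_le i'.2 hp)]

/-- Coordinates as points. -/
noncomputable def ptE (m : ℕ) : Fin (2 ^ m) ≃ (Fin m → ZMod 2) :=
  Equiv.ofBijective (pt m) ((Fintype.bijective_iff_injective_and_card _).2
    ⟨pt_injective m, by simp⟩)

theorem wtN_eq (m : ℕ) : ∀ j, j < 2 ^ m →
    wtN j = (Finset.univ.filter fun k : Fin m => Nat.testBit j k.val = true).card := by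
  induction m with
  | zero =>
    intro j hj
    have : j = 0 := by simpa using hj
    subst this
    simp [wtN_zero]
  | succ m ih =>
    intro j hj
    rw [pow_succ] at hj
    rw [Fin.card_filter_univ_succ]
    simp only [Fin.val_zero, Fin.val_succ, Nat.testBit_succ]
    rw [← ih (j / 2) (by omega)]
    obtain ⟨i, rfl | rfl⟩ := Nat.even_or_odd' j
    · rw [wtN_even]; simp
    · rw [wtN_odd, show (2 * i + 1) / 2 = i by omega]; simp

theorem upper' (r m : ℕ) (s : ℕ)
    (D : Submodule (ZMod 2) (Fin (2 ^ m) → ZMod 2)) (hD : D ≤ RMcode r m)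
    (hs : (chi D).ncard = s) : finrank (ZMod 2) D ≤ cntN s (m - r) := by
  classical
  let e : (Fin (2 ^ m) → ZMod 2) ≃ₗ[ZMod 2] ((Fin m → ZMod 2) → ZMod 2) :=
    LinearEquiv.funCongrLeft (ZMod 2) (ZMod 2) (ptE m).symm
  have he : ∀ c x, e c x = c ((ptE m).symm x) := fun c x => rfl
  have h1 := upper_s19 m (r + 1) (D.map (e : _ →ₗ[ZMod 2] _))
    ((chi D).toFinset.map (ptE m).toEmbedding) (by
      refine Submodule.map_le_iff_le_comap.2 (hD.trans (Submodule.span_le.2 ?_))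
      rintro _ ⟨f, hf, rfl⟩
      show e _ ∈ PCode (r + 1) m
      have : e (fun i => MvPolynomial.eval
          (fun j : Fin m => if Nat.testBit i.val j.val then 1 else 0) f) =
          ∑ d ∈ f.support, f.coeff d • (fun x : Fin m → ZMod 2 => ∏ i, x i ^ d i) := by
        funext x
        rw [he]
        have hx : (fun j : Fin m => if Nat.testBit ((ptE m).symm x).val j.val then (1 : ZMod 2)
            else 0) = x := (ptE m).apply_symm_apply x
        rw [hx, MvPolynomial.eval_eq']
        simp
      rw [this]
      refine Submodule.sum_mem _ fun d hd => Submodule.smul_mem _ _ (PCode_mem _ ?_)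
      have := MvPolynomial.le_totalDegree hd
      rw [Finsupp.sum_fintype _ _ (by simp)] at this
      omega) (by
      rintro _ ⟨c, hc, rfl⟩ x hx
      show c ((ptE m).symm x) = 0
      by_contra hne
      apply hx
      rw [Finset.mem_map]
      refine ⟨(ptE m).symm x, ?_, by simp⟩
      simp only [Set.mem_toFinset]
      exact ⟨c, hc, hne⟩)
  rw [LinearEquiv.finrank_map_eq, Finset.card_map, ← Set.ncard_eq_toFinset_card', hs] at h1
  rwa [show m + 1 - (r + 1) = m - r by omega] at h1

theorem cntN_mono {s s' : ℕ} (h : s ≤ s') (k : ℕ) : cntN s k ≤ cntN s' k := by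
  unfold cntN
  apply Finset.card_le_card
  apply Finset.filter_subset_filter
  simpa using h

/-- Indicator of submasks. -/
def Gm (m : ℕ) : Matrix (Fin (2 ^ m)) (Fin (2 ^ m)) (ZMod 2) := fun j i =>
  if ∀ k : Fin m, Nat.testBit i.val k.val = true → Nat.testBit j.val k.val = true then 1 else 0

theorem Gm_le (m : ℕ) (j i : Fin (2 ^ m)) (h : Gm m j i ≠ 0) : i ≤ j := by
  have h1 : ∀ k : Fin m, Nat.testBit i.val k.val = true → Nat.testBit j.val k.val = true := by
    by_contra hh
    exact h (if_neg hh)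
  have : i.val &&& j.val = i.val := by
    apply Nat.eq_of_testBit_eq
    intro k
    rw [Nat.testBit_and]
    by_cases hk : k < m
    · have := h1 ⟨k, hk⟩
      simp only at this
      cases h2 : Nat.testBit i.val k <;> simp_all
    · have hp : 2 ^ m ≤ 2 ^ k := Nat.pow_le_pow_right (by norm_num) (by omega)
      rw [Nat.testBit_lt_two_pow (lt_of_lt_of_le i.2 hp)]; simp
  rw [Fin.le_def, ← this]
  exact Nat.and_le_right

theorem Gm_li (m : ℕ) : LinearIndependent (ZMod 2) (Gm m) := by
  have hdet : (Gm m).det = 1 := by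
    rw [Matrix.det_of_lowerTriangular (Gm m)]
    · simp [Gm]
    · intro i j hij
      by_contra hne
      exact absurd (Gm_le m i j hne) (not_le.2 hij)
  have hu : IsUnit (Gm m) :=
    (Matrix.isUnit_iff_isUnit_det _).2 (by rw [hdet]; exact isUnit_one)
  exact Matrix.linearIndependent_rows_of_isUnit hu

theorem Gm_mem (r m : ℕ) (j : Fin (2 ^ m)) (h : m - r ≤ wtN j.val) : Gm m j ∈ RMcode r m := by
  apply Submodule.subset_span
  refine ⟨∏ k ∈ Finset.univ.filter (fun k : Fin m => ¬ Nat.testBit j.val k.val = true),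
    (1 - MvPolynomial.X k), ?_, ?_⟩
  · refine (MvPolynomial.totalDegree_finset_prod _ _).trans ?_
    have h1 : ∀ k ∈ Finset.univ.filter (fun k : Fin m => ¬ Nat.testBit j.val k.val = true),
        (1 - MvPolynomial.X k : MvPolynomial (Fin m) (ZMod 2)).totalDegree ≤ 1 := by
      intro k _
      refine (MvPolynomial.totalDegree_sub _ _).trans ?_
      simp
    refine (Finset.sum_le_sum h1).trans ?_
    have h2 := Finset.card_filter_add_card_filter_not (s := Finset.univ)
      (fun k : Fin m => Nat.testBit j.val k.val = true)
    rw [← wtN_eq m _ j.2] at h2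
    simp only [Finset.card_univ, Fintype.card_fin] at h2
    simp only [Finset.sum_const, smul_eq_mul, mul_one]
    omega
  · funext i
    rw [map_prod]
    simp only [map_sub, map_one, MvPolynomial.eval_X]
    unfold Gm
    split_ifs with hh
    · symm
      apply Finset.prod_eq_one
      intro k hk
      rw [if_neg (fun hc => (Finset.mem_filter.1 hk).2 (hh k hc))]
      simp
    · push Not at hh
      obtain ⟨k, hk1, hk2⟩ := hh
      symm
      apply Finset.prod_eq_zero (i := k)
      · simpa using hk2
      · simp [hk1]

theorem lower_s19 (r m s : ℕ) (hs2 : s ≤ 2 ^ m) :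
    ∃ D : Submodule (ZMod 2) (Fin (2 ^ m) → ZMod 2), D ≤ RMcode r m ∧ (chi D).ncard ≤ s ∧
      finrank (ZMod 2) D = cntN s (m - r) := by
  let J := {j : Fin (2 ^ m) // j.val < s ∧ m - r ≤ wtN j.val}
  let g : J → (Fin (2 ^ m) → ZMod 2) := fun j => Gm m j.1
  have hg : LinearIndependent (ZMod 2) g := (Gm_li m).comp _ Subtype.val_injective
  refine ⟨Submodule.span (ZMod 2) (Set.range g), ?_, ?_, ?_⟩
  · rw [Submodule.span_le]
    rintro _ ⟨j, rfl⟩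
    exact Gm_mem r m j.1 j.2.2
  · have hsub : chi (Submodule.span (ZMod 2) (Set.range g)) ⊆ {i | i.val < s} := by
      rintro i ⟨c, hc, hne⟩
      by_contra hi
      apply hne
      have : Submodule.span (ZMod 2) (Set.range g) ≤
          LinearMap.ker (LinearMap.proj i : (Fin (2 ^ m) → ZMod 2) →ₗ[ZMod 2] ZMod 2) := by
        rw [Submodule.span_le]
        rintro _ ⟨j, rfl⟩
        show Gm m j.1 i = 0
        by_contra h0
        have h1 := Gm_le m j.1 i h0
        have h2 := j.2.1
        exact hi (lt_of_le_of_lt (Fin.le_def.1 h1) h2 : i.val < s)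
      exact this hc
    refine (Set.ncard_le_ncard hsub (Set.toFinite _)).trans ?_
    have : Set.ncard (Fin.val '' {i : Fin (2 ^ m) | i.val < s}) ≤ (Finset.range s : Set ℕ).ncard := by
      apply Set.ncard_le_ncard _ (Set.toFinite _)
      rintro _ ⟨i, hi, rfl⟩
      simpa using hi
    rwa [Set.ncard_image_of_injective _ Fin.val_injective, Set.ncard_coe_finset,
      Finset.card_range] at this
  · rw [finrank_span_eq_card hg]
    unfold cntN
    rw [Fintype.card_subtype]
    refine Finset.card_bij (fun j _ => j.val) ?_ ?_ ?_
    · intro j hj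
      simpa using hj
    · intro a _ b _ h
      exact Fin.ext h
    · intro b hb
      have hb' : b < s ∧ m - r ≤ wtN b := by simpa using hb
      exact ⟨⟨b, by omega⟩, by simpa using hb', rfl⟩

/-- for `0 ≤ r ≤ m` and `1 ≤ s ≤ 2^m`, `U_s(RM(r,m))` equals the number
of integers `j ∈ [0, s−1]` whose binary representation has at least `m − r` ones. -/
theorem stmt19 (r m : ℕ) (hrm : r ≤ m) (s : ℕ) (hs1 : 1 ≤ s) (hs2 : s ≤ 2 ^ m) :
    Ucap (RMcode r m) s = ((Finset.range s).filter fun j => m - r ≤ wtN j).card := by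
  show _ = cntN s (m - r)
  refine IsGreatest.csSup_eq ⟨lower_s19 r m s hs2, ?_⟩
  rintro d ⟨D, hD, hc, rfl⟩
  exact (upper' r m _ D hD rfl).trans (cntN_mono hc _)
end
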